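/- Let I be a ROS-UET instance on a network G=(V,E,c,v*) and let H be a Hamiltonian cycle of G with total travel time c(H). Then there exists a feasible schedule for I with makespan at most 2·c(H) + max{n, m}. -/

import Mathlib

/-- A network: a connected simple graph with positive integer travel times
and a distinguished depot vertex. -/
structure Network (V : Type*) where
  G : SimpleGraph V
  conn : G.Connected
  c : V → V → ℕ
  csymm : ∀ u v : V, c u v = c v u
  cpos : ∀ u v : V, G.Adj u v → 0 < c u v
  depot : V

/-- A route with `s` stays; stay `k` (for `k < s`) is `(a k, v k, b k)`. -/
structure Route (V : Type*) where
  s : ℕ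
  a : ℕ → ℕ
  v : ℕ → V
  b : ℕ → ℕ

/-- The length of a route: the end of its last stay. -/
def Route.length {V : Type*} (R : Route V) : ℕ := R.b (R.s - 1)

/-- `R` is a valid route in the network `N`. -/
def IsRoute {V : Type*} (N : Network V) (R : Route V) : Prop :=
  0 < R.s ∧ R.v 0 = N.depot ∧ R.v (R.s - 1) = N.depot ∧ R.a 0 = 0 ∧
    (∀ k < R.s, R.a k ≤ R.b k) ∧
    ∀ k, k + 1 < R.s →
      N.G.Adj (R.v k) (R.v (k + 1)) ∧
      R.a (k + 1) = R.b k + N.c (R.v k) (R.v (k + 1))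

/-- Routes `R` (one per machine) are compatible with the (unit execution time)
schedule `S`: each machine stays at the location of each job while processing it. -/
def Compatible {V : Type*} {n m : ℕ} (loc : Fin n → V)
    (S : Fin n → Fin m → ℕ) (R : Fin m → Route V) : Prop :=
  ∀ (i : Fin n) (q : Fin m), ∃ k < (R q).s,
    (R q).v k = loc i ∧ (R q).a k ≤ S i q ∧ S i q + 1 ≤ (R q).b k

/-- A schedule for a ROS-UET instance is feasible. -/
def Feasible {V : Type*} {n m : ℕ} (N : Network V) (loc : Fin n → V)
    (S : Fin n → Fin m → ℕ) : Prop :=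
  (∀ (i j : Fin n) (q : Fin m), i ≠ j → S i q ≠ S j q) ∧
  (∀ (i : Fin n) (q r : Fin m), q ≠ r → S i q ≠ S i r) ∧
  ∃ R : Fin m → Route V, (∀ q, IsRoute N (R q)) ∧ Compatible loc S R

/-- The makespan of a schedule: the least `L` such that there are compatible
routes, each of length at most `L`. -/
noncomputable def makespan {V : Type*} {n m : ℕ} (N : Network V) (loc : Fin n → V)
    (S : Fin n → Fin m → ℕ) : ℕ :=
  sInf {L | ∃ R : Fin m → Route V, (∀ q, IsRoute N (R q)) ∧
    Compatible loc S R ∧ ∀ q, Route.length (R q) ≤ L}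

/-- The total travel time of a walk in a graph with travel times `c`. -/
def walkWeight {V : Type*} {G : SimpleGraph V} (c : V → V → ℕ) {u w : V}
    (p : G.Walk u w) : ℕ :=
  (p.darts.map fun d => c d.toProd.1 d.toProd.2).sum

/-!
Traverse a closed walk `H` through the depot and all job locations twice. For `L = max n m`, number
the jobs `0, …, n - 1` in the order in which the first lap meets them and give job `r` on machine
`q` the slot `(r + q) mod L`. This is a Latin rectangle, and on each machine the jobs whose slot
has wrapped around come first. So machine `q` processes those on its first lap and the others on
its second: along its route the slots increase. If each operation starts at its slot plus the
travel time to its stay, then a machine spends at most `2 * c(H)` time units travelling and `L`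
processing or waiting. Two machines never process a job at the same time, because the one with the
later slot does not reach the job by an earlier stay.
-/

theorem injective_add_of_monovary {ι α : Type*} [Add α] [LinearOrder α] [AddLeftStrictMono α]
    [AddRightMono α] {f g : ι → α} (hfg : Monovary f g) (hg : Function.Injective g) :
    Function.Injective (f + g) := by
  have hlt {i j : ι} (h : g i < g j) : (f + g) i < (f + g) j :=
    add_lt_add_of_le_of_lt (hfg h) h
  intro i j hij
  rcases lt_trichotomy (g i) (g j) with h | h | h
  · exact absurd hij (hlt h).ne
  · exact hg h
  · exact absurd hij (hlt h).ne'

theorem exists_perm_monovary {n : ℕ} {α : Type*} [LinearOrder α] (f : Fin n → α) :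
    ∃ σ : Equiv.Perm (Fin n), Monovary f σ :=
  ⟨(Tuple.sort f).symm, fun i j hij => by simpa using Tuple.monotone_sort f hij.le⟩

section walkWeight

variable {V : Type*} {G : SimpleGraph V} (c : V → V → ℕ) {u v w : V}

theorem walkWeight_append (p : G.Walk u v) (q : G.Walk v w) :
    walkWeight c (p.append q) = walkWeight c p + walkWeight c q := by
  simp [walkWeight]

theorem walkWeight_rotate [DecidableEq V] (p : G.Walk u u) (hv : v ∈ p.support) :
    walkWeight c (p.rotate v hv) = walkWeight c p :=
  ((p.rotate_darts v hv).perm.map _).sum_eq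

theorem walkWeight_take_succ (p : G.Walk u v) {k : ℕ} (hk : k < p.length) :
    walkWeight c (p.take (k + 1)) =
      walkWeight c (p.take k) + c (p.getVert k) (p.getVert (k + 1)) := by
  simp only [walkWeight, SimpleGraph.Walk.darts_take, List.map_take]
  rw [List.sum_take_succ _ _ (by simpa using hk), List.getElem_map,
    SimpleGraph.Walk.darts_getElem_eq_getVert]

theorem walkWeight_take_mono (p : G.Walk u v) : Monotone fun k => walkWeight c (p.take k) := by
  simpa only [walkWeight, SimpleGraph.Walk.darts_take, List.map_take]
    using List.monotone_sum_take _

theorem walkWeight_take_length (p : G.Walk u v) :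
    walkWeight c (p.take p.length) = walkWeight c p := by
  simp [walkWeight, SimpleGraph.Walk.darts_take, List.take_of_length_le]

end walkWeight

/-- The route that follows the walk `p`, where `wait k` is the total time spent in the stays before
stay `k`; thus stay `k` has duration `wait (k + 1) - wait k`. -/
def Route.ofWalk {V : Type*} {G : SimpleGraph V} (c : V → V → ℕ) {u v : V} (p : G.Walk u v)
    (wait : ℕ → ℕ) : Route V where
  s := p.length + 1
  a k := walkWeight c (p.take k) + wait k
  v := p.getVert
  b k := walkWeight c (p.take k) + wait (k + 1)

theorem Route.length_ofWalk {V : Type*} {G : SimpleGraph V} (c : V → V → ℕ) {u v : V}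
    (p : G.Walk u v) (wait : ℕ → ℕ) :
    (Route.ofWalk c p wait).length = walkWeight c p + wait (p.length + 1) := by
  simp [Route.length, Route.ofWalk, walkWeight_take_length]

theorem isRoute_ofWalk {V : Type*} (N : Network V) (p : N.G.Walk N.depot N.depot) {wait : ℕ → ℕ}
    (hwait : Monotone wait) (hwait0 : wait 0 = 0) : IsRoute N (Route.ofWalk N.c p wait) := by
  refine ⟨p.length.succ_pos, p.getVert_zero, p.getVert_length, ?_, ?_, ?_⟩
  · simp [Route.ofWalk, hwait0, walkWeight]
  · exact fun k _ => Nat.add_le_add_left (hwait k.le_succ) _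
  · intro k hk
    have hk : k < p.length := Nat.lt_of_succ_lt_succ hk
    refine ⟨p.adj_getVert_succ hk, ?_⟩
    simp only [Route.ofWalk, walkWeight_take_succ N.c p hk]
    exact Nat.add_right_comm _ _ _

/-- A combinatorial plan for `m` machines following the walk `p`: job `i` is processed by machine
`q` during stay `visit i q`, in the time slot `slot i q < L` of an open shop without travel times.
Among the operations of one job, and among those of one machine, slots are distinct and operations
in later slots do not belong to earlier stays. -/
structure SlotPlan {V : Type*} {G : SimpleGraph V} {u v : V} (p : G.Walk u v) {n : ℕ}
    (loc : Fin n → V) (m L : ℕ) where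
  visit : Fin n → Fin m → ℕ
  slot : Fin n → Fin m → ℕ
  visit_le : ∀ i q, visit i q ≤ p.length
  getVert_visit : ∀ i q, p.getVert (visit i q) = loc i
  slot_lt : ∀ i q, slot i q < L
  slot_injective_of_job : ∀ i, Function.Injective (slot i)
  slot_injective_of_machine : ∀ q, Function.Injective fun i => slot i q
  monovary_of_job : ∀ i, Monovary (visit i) (slot i)
  monovary_of_machine : ∀ q, Monovary (fun i => visit i q) fun i => slot i q

namespace SlotPlan

section Schedule

variable {V : Type*} {G : SimpleGraph V} {u v : V} {p : G.Walk u v} {n m L : ℕ} {loc : Fin n → V}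
  (P : SlotPlan p loc m L) (c : V → V → ℕ)

/-- The schedule of a slot plan: slots are delayed by the travel time to the respective stay. -/
def start (i : Fin n) (q : Fin m) : ℕ := walkWeight c (p.take (P.visit i q)) + P.slot i q

theorem start_injective_of_job (i : Fin n) : Function.Injective (P.start c i) :=
  injective_add_of_monovary
    ((P.monovary_of_job i).comp_monotone_left (walkWeight_take_mono c p))
    (P.slot_injective_of_job i)

theorem start_injective_of_machine (q : Fin m) : Function.Injective fun i => P.start c i q :=
  injective_add_of_monovary
    ((P.monovary_of_machine q).comp_monotone_left (walkWeight_take_mono c p))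
    (P.slot_injective_of_machine q)

/-- The number of slots that must have elapsed when machine `q` begins stay `k`, if it leaves each
stay as early as possible. -/
def clock (q : Fin m) (k : ℕ) : ℕ :=
  (Finset.univ.filter fun i => P.visit i q < k).sup fun i => P.slot i q + 1

theorem clock_zero (q : Fin m) : P.clock q 0 = 0 := by
  simp [clock]

theorem clock_mono (q : Fin m) : Monotone (P.clock q) := fun _ _ hkl =>
  Finset.sup_mono (Finset.monotone_filter_right _ fun _ _ hi => lt_of_lt_of_le hi hkl)

theorem clock_le (q : Fin m) (k : ℕ) : P.clock q k ≤ L :=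
  Finset.sup_le fun i _ => P.slot_lt i q

theorem clock_visit_le_slot (i : Fin n) (q : Fin m) : P.clock q (P.visit i q) ≤ P.slot i q := by
  refine Finset.sup_le fun j hj => ?_
  have hvisit : P.visit j q < P.visit i q := (Finset.mem_filter.mp hj).2
  have hne : P.slot j q ≠ P.slot i q := fun h =>
    hvisit.ne (by rw [P.slot_injective_of_machine q h])
  exact lt_of_le_of_ne ((P.monovary_of_machine q).symm hvisit) hne

theorem slot_lt_clock_visit_succ (i : Fin n) (q : Fin m) :
    P.slot i q < P.clock q (P.visit i q + 1) :=
  Finset.le_sup (f := fun i => P.slot i q + 1) (by simp)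

theorem compatible :
    Compatible loc (P.start c) fun q => Route.ofWalk c p (P.clock q) := fun i q =>
  ⟨P.visit i q, Nat.lt_succ_of_le (P.visit_le i q), P.getVert_visit i q,
    Nat.add_le_add_left (P.clock_visit_le_slot i q) _,
    Nat.add_le_add_left (P.slot_lt_clock_visit_succ i q) _⟩

end Schedule

section Network

variable {V : Type*} {N : Network V} {p : N.G.Walk N.depot N.depot} {n m L : ℕ} {loc : Fin n → V}
  (P : SlotPlan p loc m L)

theorem isRoute (q : Fin m) : IsRoute N (Route.ofWalk N.c p (P.clock q)) :=
  isRoute_ofWalk N p (P.clock_mono q) (P.clock_zero q)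

theorem feasible : Feasible N loc (P.start N.c) :=
  ⟨fun _ _ q => (P.start_injective_of_machine N.c q).ne,
    fun i _ _ => (P.start_injective_of_job N.c i).ne,
    _, P.isRoute, P.compatible N.c⟩

theorem makespan_le : makespan N loc (P.start N.c) ≤ walkWeight N.c p + L := by
  refine Nat.sInf_le ⟨_, P.isRoute, P.compatible N.c, fun q => ?_⟩
  rw [Route.length_ofWalk]
  exact Nat.add_le_add_left (P.clock_le q _) _

end Network

/-- The plan on two laps of `p` in which the operation of machine `q` on the job of rank `r` has
slot `(r + q) mod L`; it is executed on the first lap exactly if `r + q` has wrapped around. -/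
def twoLaps {V : Type*} {G : SimpleGraph V} {u : V} {p : G.Walk u u} {n m L : ℕ} {loc : Fin n → V}
    (hn : n ≤ L) (hm : m ≤ L) (pos : Fin n → ℕ) (hpos : ∀ i, p.getVert (pos i) = loc i)
    (hpos_le : ∀ i, pos i ≤ p.length) (rank : Equiv.Perm (Fin n)) (hrank : Monovary pos rank) :
    SlotPlan (p.append p) loc m L where
  visit i q := if (rank i + q : ℕ) < L then p.length + pos i else pos i
  slot i q := if (rank i + q : ℕ) < L then rank i + q else rank i + q - L
  visit_le i q := by
    have := hpos_le i
    rw [SimpleGraph.Walk.length_append]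
    split_ifs <;> omega
  getVert_visit i q := by
    split_ifs
    · simp [SimpleGraph.Walk.getVert_append, hpos]
    · rw [SimpleGraph.Walk.getVert_append']
      simp [hpos_le, hpos]
  slot_lt i q := by
    split_ifs <;> omega
  slot_injective_of_job i q r h := by
    beta_reduce at h
    split_ifs at h <;> omega
  slot_injective_of_machine q i j h := by
    apply rank.injective
    beta_reduce at h
    split_ifs at h <;> omega
  -- Operations of the first lap have slots `r + q - L < min r q`, those of the second lap do not.
  monovary_of_job i q r h := by
    beta_reduce at h ⊢
    split_ifs at h ⊢ <;> omega
  monovary_of_machine q i j h := by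
    have hpos_mono : (rank i : ℕ) < rank j → pos i ≤ pos j := @hrank i j
    have := hpos_le i
    beta_reduce at h ⊢
    split_ifs at h ⊢ <;> omega

theorem nonempty_append_self {V : Type*} {G : SimpleGraph V} {u : V} (p : G.Walk u u) {n m L : ℕ}
    {loc : Fin n → V} (hn : n ≤ L) (hm : m ≤ L) (hloc : ∀ i, loc i ∈ p.support) :
    Nonempty (SlotPlan (p.append p) loc m L) := by
  choose pos hpos hpos_le using
    fun i => SimpleGraph.Walk.mem_support_iff_exists_getVert.mp (hloc i)
  obtain ⟨rank, hrank⟩ := exists_perm_monovary pos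
  exact ⟨twoLaps hn hm pos hpos hpos_le rank hrank⟩

end SlotPlan

theorem statement3_general {V : Type*} {n m : ℕ} (N : Network V) (loc : Fin n → V) {u : V}
    (W : N.G.Walk u u) (hdepot : N.depot ∈ W.support) (hloc : ∀ i, loc i ∈ W.support) :
    ∃ S : Fin n → Fin m → ℕ, Feasible N loc S ∧
      makespan N loc S ≤ 2 * walkWeight N.c W + max n m := by
  classical
  let p : N.G.Walk N.depot N.depot := W.rotate N.depot hdepot
  have hweight : walkWeight N.c (p.append p) = 2 * walkWeight N.c W := by
    rw [walkWeight_append, walkWeight_rotate, two_mul]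
  have hlocp (i : Fin n) : loc i ∈ p.support := (W.mem_support_rotate_iff _ hdepot).mpr (hloc i)
  obtain ⟨P⟩ : Nonempty (SlotPlan (p.append p) loc m (max n m)) :=
    SlotPlan.nonempty_append_self p (le_max_left n m) (le_max_right n m) hlocp
  exact ⟨P.start N.c, P.feasible, hweight ▸ P.makespan_le⟩

/-- For every ROS-UET instance and every Hamiltonian cycle `H`
of its network, there is a feasible schedule with makespan at most
`2·c(H) + max {n, m}`. -/
theorem statement3 {V : Type*} [Fintype V] [DecidableEq V] {n m : ℕ}
    (N : Network V) (loc : Fin n → V) (hm : 0 < m)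
    (u : V) (H : N.G.Walk u u) (hH : H.IsHamiltonianCycle) :
    ∃ S : Fin n → Fin m → ℕ, Feasible N loc S ∧
      makespan N loc S ≤ 2 * walkWeight N.c H + max n m :=
  statement3_general N loc H (hH.mem_support _) fun i => hH.mem_support (loc i)
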